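/- Let ρ be a separable density matrix on ℂᵈ ⊗ ℂᵈ', represented as a matrix indexed by Fin d × Fin d'. Then its partial transpose ρ^{T_B}, defined by (ρ^{T_B})_{(i,j),(k,l)} = ρ_{(i,l),(k,j)}, is positive semidefinite. -/

import Mathlib

open Matrix Kronecker BigOperators
open scoped ComplexOrder

/-- A density matrix on a bipartite system `ℂ^α ⊗ ℂ^β` (matrices indexed by pairs) is
separable if it is a finite convex combination of Kronecker products of density matrices. -/
def Separable {α β : Type} [Fintype α] [Fintype β] [DecidableEq α] [DecidableEq β]
    (ρ : Matrix (α × β) (α × β) ℂ) : Prop :=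
  ∃ (N : ℕ) (q : Fin N → ℝ) (A : Fin N → Matrix α α ℂ) (B : Fin N → Matrix β β ℂ),
    (∀ j, 0 ≤ q j) ∧ (∑ j, q j) = 1 ∧
    (∀ j, (A j).PosSemidef) ∧ (∀ j, (A j).trace = 1) ∧
    (∀ j, (B j).PosSemidef) ∧ (∀ j, (B j).trace = 1) ∧
    ρ = ∑ j, (q j : ℂ) • (A j ⊗ₖ B j)

/-- The partial transpose (transposition of the second tensor factor):
`(ρ^{T_B})_{(i,j),(k,l)} = ρ_{(i,l),(k,j)}`. -/
def partialTranspose {α β : Type} (ρ : Matrix (α × β) (α × β) ℂ) :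
    Matrix (α × β) (α × β) ℂ :=
  Matrix.of fun p q => ρ (p.1, q.2) (q.1, p.2)

/-- Peres criterion: the partial transpose of a separable density matrix is positive
semidefinite. -/
theorem stmt6 (d d' : ℕ) (ρ : Matrix (Fin d × Fin d') (Fin d × Fin d') ℂ)
    (hρ : ρ.PosSemidef) (htr : ρ.trace = 1) (hsep : Separable ρ) :
    (partialTranspose ρ).PosSemidef := by
  obtain ⟨N, q, A, B, hq, -, hA, -, hB, -, rfl⟩ := hsep
  have key : partialTranspose (∑ j, (q j : ℂ) • (A j ⊗ₖ B j))
      = ∑ j, (q j : ℂ) • (A j ⊗ₖ (B j)ᵀ) := by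
    ext p r
    simp [partialTranspose, Matrix.sum_apply]
  rw [key]
  -- Each summand is positive because transposition preserves positivity of `B j`.
  refine Matrix.posSemidef_sum _ fun j _ => ?_
  exact ((hA j).kronecker (hB j).transpose).smul (by exact_mod_cast hq j)
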